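/- For all i, g, h ∈ {0,1,…,d} with g ≤ i, h ≤ i, and such that at least one of g and h is not equal to i, one has (E_i* A_g E_i*)(E_i* A_h E_i*) = E_i* A_g A_h E_i*. -/

import Mathlib

open Finset Matrix

/-- Vertex set of the wreath product `K_{n 0} ≀ K_{n 1} ≀ ⋯ ≀ K_{n (d-1)}`
(paper indices `n_1, …, n_d` correspond to `n 0, …, n (d-1)`). -/
abbrev Vx (d : ℕ) (n : ℕ → ℕ) : Type := (i : Fin d) → Fin (n i)

/-- `delta x y = 0` if `x = y`; otherwise `delta x y` is the largest (1-based)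
index at which `x` and `y` differ. -/
def delta {d : ℕ} {n : ℕ → ℕ} (x y : Vx d n) : ℕ :=
  (Finset.univ.filter fun i => x i ≠ y i).sup fun i => (i : ℕ) + 1

/-- The `i`-th adjacency matrix of the wreath product: `(A i) x y = 1` iff `delta x y = i`. -/
noncomputable def A (d : ℕ) (n : ℕ → ℕ) (i : ℕ) : Matrix (Vx d n) (Vx d n) ℂ :=
  Matrix.of fun x y => if delta x y = i then 1 else 0

/-- The valencies: `k 0 = 1` and, for `1 ≤ i`, `k i = n_1 ⋯ n_{i-1} (n_i - 1)`,
i.e. `k i = n 0 ⋯ n (i-2) * (n (i-1) - 1)`. -/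
def k (n : ℕ → ℕ) (i : ℕ) : ℕ :=
  if i = 0 then 1 else (∏ j ∈ Finset.range (i - 1), n j) * (n (i - 1) - 1)

/-- The dual idempotent `E_i*` with respect to the base point `x₀`: the diagonal
0-1 matrix with `(E_i*)_{yy} = 1` iff `delta x₀ y = i`. -/
noncomputable def Es {d : ℕ} {n : ℕ → ℕ} (x₀ : Vx d n) (i : ℕ) :
    Matrix (Vx d n) (Vx d n) ℂ :=
  Matrix.of fun y z => if y = z ∧ delta x₀ y = i then 1 else 0

/-- The all-ones matrix `J`. -/
noncomputable def Jm (d : ℕ) (n : ℕ → ℕ) : Matrix (Vx d n) (Vx d n) ℂ :=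
  Matrix.of fun _ _ => 1

/-- The matrices `G i j`. -/
noncomputable def G {d : ℕ} {n : ℕ → ℕ} (x₀ : Vx d n) (i j : ℕ) :
    Matrix (Vx d n) (Vx d n) ℂ :=
  if i < j then ((k n j : ℂ))⁻¹ • (Es x₀ i * A d n j * Es x₀ j)
  else if j < i then ((k n j : ℂ))⁻¹ • (Es x₀ i * A d n i * Es x₀ j)
  else ((k n i : ℂ))⁻¹ • (Es x₀ i * Jm d n * Es x₀ i)

/-- The span `U` of the matrices `G i j`, `i, j ∈ [d]`. -/
noncomputable def Uspan {d : ℕ} {n : ℕ → ℕ} (x₀ : Vx d n) :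
    Submodule ℂ (Matrix (Vx d n) (Vx d n) ℂ) :=
  Submodule.span ℂ (Set.range fun p : Fin (d + 1) × Fin (d + 1) => G x₀ p.1 p.2)

/-- The Terwilliger algebra of the wreath product with respect to `x₀`. -/
noncomputable def Ter {d : ℕ} {n : ℕ → ℕ} (x₀ : Vx d n) :
    Subalgebra ℂ (Matrix (Vx d n) (Vx d n) ℂ) :=
  Algebra.adjoin ℂ
    ((Set.range fun i : Fin (d + 1) => A d n i) ∪ (Set.range fun i : Fin (d + 1) => Es x₀ i))

/-- The matrices `F i h`, for `1 ≤ i ≤ d` and `0 ≤ h ≤ i - 1`. -/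
noncomputable def F {d : ℕ} {n : ℕ → ℕ} (x₀ : Vx d n) (i h : ℕ) :
    Matrix (Vx d n) (Vx d n) ℂ :=
  if h < i - 1 then
    (∑ j ∈ Finset.range (h + 1), (k n j : ℂ))⁻¹ •
        (∑ j ∈ Finset.range (h + 1), Es x₀ i * A d n j * Es x₀ i)
      - (∑ j ∈ Finset.range (h + 2), (k n j : ℂ))⁻¹ •
          (∑ j ∈ Finset.range (h + 2), Es x₀ i * A d n j * Es x₀ i)
  else
    (∑ j ∈ Finset.range i, (k n j : ℂ))⁻¹ •
        (∑ j ∈ Finset.range i, Es x₀ i * A d n j * Es x₀ i)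
      - G x₀ i i

/-!
The function `delta` is an ultrametric, so every triangle is isosceles with its two longest sides
equal. Evaluated at `y`, `z` on the sphere of radius `i` around `x₀`, both sides of the identity
count the midpoints `w` with `delta y w = g` and `delta w z = h`; the left-hand side counts only
those `w` on the same sphere. A point `w` off the sphere is at distance `max i (delta x₀ w)` from
every point of the sphere, so it can be a midpoint only if `g = h ≥ i`.
-/

section Ultrametric

variable {d : ℕ} {n : ℕ → ℕ}

theorem delta_le_iff {x y : Vx d n} {m : ℕ} :
    delta x y ≤ m ↔ ∀ j : Fin d, m ≤ j → x j = y j := by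
  simp only [delta, Finset.sup_le_iff, Finset.mem_filter, Finset.mem_univ, true_and]
  refine forall_congr' fun j => ?_
  rw [Nat.succ_le_iff, ← not_le, not_imp_not]

theorem delta_comm (x y : Vx d n) : delta x y = delta y x := by
  simp only [delta, ne_comm]

theorem delta_le_max (x y z : Vx d n) : delta x z ≤ max (delta x y) (delta y z) :=
  delta_le_iff.2 fun j hj =>
    (delta_le_iff.1 (le_max_left _ _) j hj).trans (delta_le_iff.1 (le_max_right _ _) j hj)

theorem delta_eq_max_of_ne {x y z : Vx d n} (hne : delta x y ≠ delta y z) :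
    delta x z = max (delta x y) (delta y z) := by
  have hxz : delta x z ≤ max (delta x y) (delta y z) := delta_le_max x y z
  have hxy : delta x y ≤ max (delta x z) (delta z y) := delta_le_max x z y
  have hyz : delta y z ≤ max (delta y x) (delta x z) := delta_le_max y x z
  rw [delta_comm z y] at hxy
  rw [delta_comm y x] at hyz
  omega

theorem delta_eq_of_ne_or_lt {x₀ y z w : Vx d n} {i : ℕ}
    (hy : delta x₀ y = i) (hz : delta x₀ z = i)
    (hw : delta y w ≠ delta w z ∨ delta y w < i) : delta x₀ w = i := by
  by_contra hne
  have delta_w {v : Vx d n} (hv : delta x₀ v = i) : delta v w = max i (delta x₀ w) := by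
    rw [← hv, delta_comm x₀ v]
    exact delta_eq_max_of_ne (by rw [delta_comm v x₀, hv]; exact Ne.symm hne)
  rcases hw with hw | hw
  · exact hw (by rw [delta_comm w z, delta_w hy, delta_w hz])
  · exact (le_max_left i (delta x₀ w)).not_gt (delta_w hy ▸ hw)

end Ultrametric

section DualIdempotent

variable {d : ℕ} {n : ℕ → ℕ} (x₀ : Vx d n)

theorem Es_eq_diagonal (i : ℕ) :
    Es x₀ i = Matrix.diagonal fun y => if delta x₀ y = i then (1 : ℂ) else 0 := by
  ext y z
  simp only [Es, Matrix.of_apply, Matrix.diagonal_apply, ite_and]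

theorem Es_mul_self (i : ℕ) : Es x₀ i * Es x₀ i = Es x₀ i := by
  simp [Es_eq_diagonal, Matrix.diagonal_mul_diagonal]

theorem Es_mul_mul_Es_congr {i j : ℕ} {M N : Matrix (Vx d n) (Vx d n) ℂ}
    (hMN : ∀ y z, delta x₀ y = i → delta x₀ z = j → M y z = N y z) :
    Es x₀ i * M * Es x₀ j = Es x₀ i * N * Es x₀ j := by
  ext y z
  simp only [Es_eq_diagonal, Matrix.mul_diagonal, Matrix.diagonal_mul]
  split_ifs with hy hz <;> simp [*]

theorem A_mul_Es_mul_A_apply {i g h : ℕ} {y z : Vx d n}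
    (hmid : ∀ w, delta y w = g → delta w z = h → delta x₀ w = i) :
    (A d n g * Es x₀ i * A d n h) y z = (A d n g * A d n h) y z := by
  rw [Es_eq_diagonal, Matrix.mul_apply, Matrix.mul_apply]
  refine Finset.sum_congr rfl fun w _ => ?_
  rw [Matrix.mul_diagonal]
  by_cases hg : delta y w = g <;> by_cases hh : delta w z = h <;> simp [A, hg, hh, hmid w]

end DualIdempotent

theorem stmt18_general {d : ℕ} {n : ℕ → ℕ} (x₀ : Vx d n) {i g h : ℕ} (hgh : g ≠ h ∨ g < i) :
    (Es x₀ i * A d n g * Es x₀ i) * (Es x₀ i * A d n h * Es x₀ i)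
      = Es x₀ i * (A d n g * A d n h) * Es x₀ i :=
  calc (Es x₀ i * A d n g * Es x₀ i) * (Es x₀ i * A d n h * Es x₀ i)
      = Es x₀ i * A d n g * (Es x₀ i * Es x₀ i) * A d n h * Es x₀ i := by
        simp only [Matrix.mul_assoc]
    _ = Es x₀ i * (A d n g * Es x₀ i * A d n h) * Es x₀ i := by
        simp only [Es_mul_self, Matrix.mul_assoc]
    _ = Es x₀ i * (A d n g * A d n h) * Es x₀ i :=
        Es_mul_mul_Es_congr x₀ fun y z hy hz => A_mul_Es_mul_A_apply x₀ fun w hyw hwz =>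
          delta_eq_of_ne_or_lt hy hz (by rwa [hyw, hwz])

/-- for `g, h ≤ i` with not both equal to `i`,
`(E_i* A_g E_i*)(E_i* A_h E_i*) = E_i* A_g A_h E_i*`. -/
theorem stmt18 (d : ℕ) (hd : 1 ≤ d) (n : ℕ → ℕ) (hn : ∀ i < d, 2 ≤ n i)
    (x₀ : Vx d n) (i g h : ℕ) (hi : i ≤ d) (hg : g ≤ i) (hh : h ≤ i)
    (hne : g ≠ i ∨ h ≠ i) :
    (Es x₀ i * A d n g * Es x₀ i) * (Es x₀ i * A d n h * Es x₀ i)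
      = Es x₀ i * (A d n g * A d n h) * Es x₀ i := by
  exact stmt18_general x₀ (by omega)
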